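/- arXiv:1901.01913 — 2 statements merged into one kernel-verified Lean document; each statement's English description precedes it below -/
import Mathlib

section
/- Let a0 ∈ ℝ^k with ‖a0‖₂ = 1 and let 0 < λ < 1. Let 𝓘 = { supp(S_λ((Č_{a0})* ι a)) : a ∈ ℝ^k, ‖a‖₂ = 1 }. For each nonempty I = {i₁ < … < i_{|I|}} ∈ 𝓘, let W_I be the k × |I| matrix whose j-th column is ι* s_{−i_j}[ι a0] / ‖ι* s_{−i_j}[ι a0]‖₂. Suppose that for every nonempty I ∈ 𝓘 one has ‖(W_I)* W_I − Id‖_op < λ²/6. Then every local minimizer ā of φ̂ restricted to the unit sphere {a ∈ ℝ^k : ‖a‖₂ = 1} satisfies one of the following: (i) S_λ((Č_{a0})* ι ā) = 0, in which case ā is a global maximizer of φ̂ over the unit sphere; or (ii) there exist ε ∈ {−1, +1} and τ ∈ {0, …, m−1} such that ā = ε · ι* s_{−τ}[ι a0] / ‖ι* s_{−τ}[ι a0]‖₂, and the unique minimizer of the inner problem defining φ̂(ā) is x*(ā) = ε · S_λ(‖ι* s_{−τ}[ι a0]‖₂) · e_τ, where e_τ is the τ-th standard basis vector of ℝ^m.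 -/
open scoped BigOperators Matrix

attribute [local instance 10] Classical.propDecidable

noncomputable section

/-- The index `t mod m` as an element of `Fin m`. -/
def idx (m : ℕ) [NeZero m] (t : ℤ) : Fin m :=
  ⟨(t % (m : ℤ)).toNat, by
    have hm : 0 < m := Nat.pos_of_ne_zero (NeZero.ne m)
    have hm' : (0 : ℤ) < (m : ℤ) := by exact_mod_cast hm
    have h1 : 0 ≤ t % (m : ℤ) := Int.emod_nonneg t (ne_of_gt hm')
    have h2 : t % (m : ℤ) < (m : ℤ) := Int.emod_lt_of_pos t hm'
    omega⟩

/-- Cyclic shift: `(cshift τ v) i = v ((i - τ) mod m)`. -/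
def cshift {m : ℕ} [NeZero m] (τ : ℤ) (v : Fin m → ℝ) : Fin m → ℝ :=
  fun i => v (idx m ((i : ℤ) - τ))

/-- Zero padding `ι : ℝ^k → ℝ^m`. -/
def pad (k m : ℕ) (a : Fin k → ℝ) : Fin m → ℝ :=
  fun i => if h : (i : ℕ) < k then a ⟨i, h⟩ else 0

/-- Restriction to the first `k` coordinates, `ι* : ℝ^m → ℝ^k`. -/
def unpad {k m : ℕ} (h : k ≤ m) (v : Fin m → ℝ) : Fin k → ℝ :=
  fun j => v (Fin.castLE h j)

/-- Circulant matrix `C_w` whose `j`-th column is `s_j[w]`. -/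
def circ {m : ℕ} [NeZero m] (w : Fin m → ℝ) : Matrix (Fin m) (Fin m) ℝ :=
  Matrix.of fun i j => cshift (j : ℤ) w i

/-- Reversed circulant matrix `Č_{a0}` whose `j`-th column is `s_{-j}[ι a0]`. -/
def rcirc (k m : ℕ) [NeZero m] (a0 : Fin k → ℝ) : Matrix (Fin m) (Fin m) ℝ :=
  Matrix.of fun i j => cshift (-(j : ℤ)) (pad k m a0) i

/-- Circular convolution `w ⊛ x = C_w x`. -/
def conv {m : ℕ} [NeZero m] (w x : Fin m → ℝ) : Fin m → ℝ := (circ w).mulVec x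

def dotp {α : Type*} [Fintype α] (u v : α → ℝ) : ℝ := ∑ i, u i * v i

def l2sq {α : Type*} [Fintype α] (v : α → ℝ) : ℝ := ∑ i, v i ^ 2

def l2norm {α : Type*} [Fintype α] (v : α → ℝ) : ℝ := Real.sqrt (l2sq v)

def l1norm {α : Type*} [Fintype α] (v : α → ℝ) : ℝ := ∑ i, |v i|

/-- Scalar soft-thresholding. -/
def soft (lam t : ℝ) : ℝ := Real.sign t * max (|t| - lam) 0

/-- Entrywise soft-thresholding `S_λ`. -/
def softvec {m : ℕ} (lam : ℝ) (u : Fin m → ℝ) : Fin m → ℝ := fun i => soft lam (u i)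

/-- The shift truncation `ι* s_{-τ}[ι a0] ∈ ℝ^k`. -/
def shiftTrunc {k m : ℕ} [NeZero m] (h : k ≤ m) (a0 : Fin k → ℝ) (τ : Fin m) : Fin k → ℝ :=
  unpad h (cshift (-(τ : ℤ)) (pad k m a0))

/-- The inner objective of the simplified marginal problem. -/
def phiHatInner (k m : ℕ) [NeZero m] (lam : ℝ) (a0 a : Fin k → ℝ) (x : Fin m → ℝ) : ℝ :=
  l2sq (pad k m a0) / 2 + l2sq x / 2 - dotp (conv (pad k m a) x) (pad k m a0) + lam * l1norm x

/-- The simplified marginal objective `φ̂`. -/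
def phiHat (k m : ℕ) [NeZero m] (lam : ℝ) (a0 a : Fin k → ℝ) : ℝ :=
  sInf (Set.range (phiHatInner k m lam a0 a))

/-- Zero-padding `ι` as an `m × k` matrix. -/
def padM (k m : ℕ) : Matrix (Fin m) (Fin k) ℝ :=
  Matrix.of fun i j => if (i : ℕ) = (j : ℕ) then 1 else 0

/-- The diagonal 0/1 projection matrix `P_I`. -/
def projM {m : ℕ} (I : Set (Fin m)) : Matrix (Fin m) (Fin m) ℝ :=
  Matrix.of fun i j => if i = j ∧ i ∈ I then 1 else 0

/-- The `ℓ² → ℓ²` operator norm of a matrix. -/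
def opNorm {α β : Type*} [Fintype α] [Fintype β] (A : Matrix α β ℝ) : ℝ :=
  sSup {c | ∃ v : β → ℝ, l2norm v = 1 ∧ c = l2norm (A.mulVec v)}

/-- The `ℓ² → ℓ∞` operator norm of a matrix. -/
def l2linfNorm {α β : Type*} [Fintype α] [Fintype β] (A : Matrix α β ℝ) : ℝ :=
  sSup {c | ∃ v : β → ℝ, l2norm v = 1 ∧ c = sSup {d | ∃ i, d = |A.mulVec v i|}}

/-- The smallest eigenvalue of a symmetric matrix, via the Rayleigh quotient. -/
def lamMin {n : ℕ} (A : Matrix (Fin n) (Fin n) ℝ) : ℝ :=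
  sInf {c | ∃ v : Fin n → ℝ, l2sq v = 1 ∧ c = dotp v (A.mulVec v)}

/-- `‖v‖_p^p = ∑ |v i|^p` for a real exponent `p`. -/
def lpPow {α : Type*} [Fintype α] (p : ℝ) (v : α → ℝ) : ℝ := ∑ i, |v i| ^ p

/-- The `ℓ^p` norm with real exponent `p`. -/
def lpNorm {α : Type*} [Fintype α] (p : ℝ) (v : α → ℝ) : ℝ := (lpPow p v) ^ (1 / p)

/-- The continuous linear functional `v ↦ ⟨g, v⟩` on `ℝ^n`. -/
def dotCLM {n : ℕ} (g : Fin n → ℝ) : (Fin n → ℝ) →L[ℝ] ℝ :=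
  LinearMap.toContinuousLinearMap
    { toFun := fun v => dotp g v
      map_add' := fun x y => by
        simp [dotp, mul_add, Finset.sum_add_distrib]
      map_smul' := fun c x => by
        simp only [dotp, Pi.smul_apply, smul_eq_mul, RingHom.id_apply, Finset.mul_sum]
        exact Finset.sum_congr rfl fun i _ => by ring }

/-!
For fixed `a` the inner problem separates over coordinates and is solved by soft-thresholding, so
`φ̂(a)` is a constant minus `½ ‖S_λ(Č* ι a)‖²`, and the entries of `Č* ι a` are the inner products
of `a` with the shift truncations `b i`. Near a local minimizer `ā` with nonzero thresholded
coefficients, `‖S_λ(Č* ι a)‖²` dominates, with equality at `ā`, the sum of the squared affine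
residuals `⟪b j, a⟫ - λ sign ⟪b j, ā⟫` over the active indices `j`, so `ā` is a local maximizer of
that sum on the sphere.

Comparing `ā` with the second endpoint of short chords gives both optimality conditions at once:
half the gradient of the sum of squares is `μ ā`, and `∑ ⟪b j, v⟫² ≤ μ ‖v‖²` for `v` orthogonal to
`ā`. With `δ = λ² / 6`, the first condition and near-orthonormality of the normalized `b j` give
`μ < (1 - δ) ‖b j‖²` for every active `j`. Near-orthonormality also gives a lower frame bound on
the span of the active `b j`, which together with the second condition leaves no nonzero `v` in
the span orthogonal to `ā`. Hence every active `b j` is parallel to `ā`, and nearly orthonormal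
vectors cannot be parallel, so exactly one index is active.
-/

section SphereMax

open scoped InnerProductSpace

open Filter Topology Metric

variable {E J : Type*} [NormedAddCommGroup E] [InnerProductSpace ℝ E] {a v : E}

/-- The second endpoint of the chord of the unit sphere that starts at `a` in the direction
`v - r • a`, for `v` orthogonal to `a`. It tends to `a` as `r → 0`. -/
def chordEnd (a v : E) (r : ℝ) : E := a + (2 * r / ‖v - r • a‖ ^ 2) • (v - r • a)

lemma norm_sub_smul_sq (ha : ‖a‖ = 1) (hv : ⟪a, v⟫_ℝ = 0) (r : ℝ) :
    ‖v - r • a‖ ^ 2 = ‖v‖ ^ 2 + r ^ 2 := by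
  rw [norm_sub_sq_real, inner_smul_right, real_inner_comm, hv, norm_smul, ha, Real.norm_eq_abs,
    mul_one, sq_abs]
  ring

lemma chordEnd_mem_sphere (ha : ‖a‖ = 1) (hv : ⟪a, v⟫_ℝ = 0) (hv0 : v ≠ 0) (r : ℝ) :
    chordEnd a v r ∈ sphere (0 : E) 1 := by
  have : 0 < ‖v - r • a‖ ^ 2 := by rw [norm_sub_smul_sq ha hv]; positivity
  have hinner : ⟪a, v - r • a⟫_ℝ = -r := by
    rw [inner_sub_right, hv, inner_smul_right, real_inner_self_eq_norm_sq, ha]; ring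
  rw [mem_sphere_zero_iff_norm, ← sq_eq_sq₀ (norm_nonneg _) zero_le_one, chordEnd,
    norm_add_sq_real, inner_smul_right, hinner, norm_smul, mul_pow, Real.norm_eq_abs, sq_abs, ha]
  field_simp
  ring

lemma tendsto_chordEnd (ha : ‖a‖ = 1) (hv : ⟪a, v⟫_ℝ = 0) (hv0 : v ≠ 0) :
    Tendsto (chordEnd a v) (𝓝 0) (𝓝[sphere 0 1] a) := by
  refine tendsto_nhdsWithin_iff.2 ⟨?_, .of_forall (chordEnd_mem_sphere ha hv hv0)⟩
  have hcont : ContinuousAt (chordEnd a v) 0 := by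
    have h0 : ‖v - (0 : ℝ) • a‖ ^ 2 ≠ 0 := by simpa using hv0
    unfold chordEnd
    fun_prop (disch := assumption)
  simpa [chordEnd] using hcont.tendsto

variable [Fintype J] {b : J → E} {c : J → ℝ}

/-- Half the gradient at `x` of the sum of squared residuals `∑ j, (⟪b j, x⟫ - c j) ^ 2`. -/
def residualGradient (b : J → E) (c : J → ℝ) (x : E) : E := ∑ j, (⟪b j, x⟫_ℝ - c j) • b j

lemma sum_residual_sq_add (b : J → E) (c : J → ℝ) (x h : E) :
    ∑ j, (⟪b j, x + h⟫_ℝ - c j) ^ 2 =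
      ∑ j, (⟪b j, x⟫_ℝ - c j) ^ 2 + 2 * ⟪residualGradient b c x, h⟫_ℝ +
        ∑ j, ⟪b j, h⟫_ℝ ^ 2 := by
  simp only [residualGradient, sum_inner, real_inner_smul_left, inner_add_right, Finset.mul_sum,
    ← Finset.sum_add_distrib]
  exact Finset.sum_congr rfl fun j _ => by ring

lemma eventually_chord_residual_le
    (hmax : IsLocalMaxOn (fun x => ∑ j, (⟪b j, x⟫_ℝ - c j) ^ 2) (sphere 0 1) a)
    (ha : ‖a‖ = 1) (hv : ⟪a, v⟫_ℝ = 0) (hv0 : v ≠ 0) :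
    ∀ᶠ r in 𝓝[>] (0 : ℝ),
      (‖v‖ ^ 2 + r ^ 2) * ⟪residualGradient b c a, v - r • a⟫_ℝ +
        r * ∑ j, ⟪b j, v - r • a⟫_ℝ ^ 2 ≤ 0 := by
  have hev : ∀ᶠ r in 𝓝[>] (0 : ℝ), _ :=
    ((tendsto_chordEnd ha hv hv0).mono_left nhdsWithin_le_nhds).eventually hmax
  filter_upwards [hev, self_mem_nhdsWithin] with r hle (hr : 0 < r)
  have hN : 0 < ‖v‖ ^ 2 + r ^ 2 := by positivity
  rw [chordEnd, norm_sub_smul_sq ha hv, sum_residual_sq_add] at hle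
  simp only [inner_smul_right, mul_pow, ← Finset.mul_sum] at hle
  -- The objective gained along the chord is the left-hand side times a positive factor.
  have hfactor : (4 * r / (‖v‖ ^ 2 + r ^ 2) ^ 2) *
      ((‖v‖ ^ 2 + r ^ 2) * ⟪residualGradient b c a, v - r • a⟫_ℝ +
        r * ∑ j, ⟪b j, v - r • a⟫_ℝ ^ 2) ≤ 0 := by
    refine le_trans (le_of_eq ?_) (sub_nonpos.2 hle)
    field_simp
    ring
  exact nonpos_of_mul_nonpos_right hfactor (by positivity)

theorem residualGradient_eq_smul
    (hmax : IsLocalMaxOn (fun x => ∑ j, (⟪b j, x⟫_ℝ - c j) ^ 2) (sphere 0 1) a)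
    (ha : ‖a‖ = 1) :
    residualGradient b c a = ⟪residualGradient b c a, a⟫_ℝ • a := by
  set g := residualGradient b c a
  set p := g - ⟪g, a⟫_ℝ • a with hp
  have hap : ⟪a, p⟫_ℝ = 0 := by
    rw [hp, inner_sub_right, inner_smul_right, real_inner_self_eq_norm_sq, ha, real_inner_comm]
    ring
  by_contra hne
  have hp0 : p ≠ 0 := sub_ne_zero.2 hne
  have hlim : ‖p‖ ^ 2 * ⟪g, p⟫_ℝ ≤ 0 := by
    refine le_of_tendsto (x := 𝓝[>] (0 : ℝ)) ?_ (eventually_chord_residual_le hmax ha hap hp0)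
    have hcont : Continuous fun r : ℝ => (‖p‖ ^ 2 + r ^ 2) * ⟪g, p - r • a⟫_ℝ +
      r * ∑ j, ⟪b j, p - r • a⟫_ℝ ^ 2 := by fun_prop
    simpa using (hcont.tendsto 0).mono_left nhdsWithin_le_nhds
  have hgp : ⟪g, p⟫_ℝ = ‖p‖ ^ 2 := by
    have hg : g = p + ⟪g, a⟫_ℝ • a := by rw [hp]; abel
    rw [hg, inner_add_left, real_inner_smul_left, hap, real_inner_self_eq_norm_sq]; ring
  rw [hgp] at hlim
  have : 0 < ‖p‖ := norm_pos_iff.2 hp0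
  exact hlim.not_gt (by positivity)

theorem sum_inner_sq_le_of_isLocalMaxOn
    (hmax : IsLocalMaxOn (fun x => ∑ j, (⟪b j, x⟫_ℝ - c j) ^ 2) (sphere 0 1) a)
    (ha : ‖a‖ = 1) (hv : ⟪a, v⟫_ℝ = 0) :
    ∑ j, ⟪b j, v⟫_ℝ ^ 2 ≤ ⟪residualGradient b c a, a⟫_ℝ * ‖v‖ ^ 2 := by
  rcases eq_or_ne v 0 with rfl | hv0
  · simp
  set μ := ⟪residualGradient b c a, a⟫_ℝ
  refine le_of_tendsto_of_tendsto (b := 𝓝[>] (0 : ℝ))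
    (f := fun r => ∑ j, ⟪b j, v - r • a⟫_ℝ ^ 2) (g := fun r => μ * (‖v‖ ^ 2 + r ^ 2))
    ?_ ?_ ?_
  · have hcont : Continuous fun r : ℝ => ∑ j, ⟪b j, v - r • a⟫_ℝ ^ 2 := by fun_prop
    simpa using (hcont.tendsto 0).mono_left nhdsWithin_le_nhds
  · have hcont : Continuous fun r : ℝ => μ * (‖v‖ ^ 2 + r ^ 2) := by fun_prop
    simpa using (hcont.tendsto 0).mono_left nhdsWithin_le_nhds
  · filter_upwards [eventually_chord_residual_le hmax ha hv hv0, self_mem_nhdsWithin]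
      with r hle (hr : 0 < r)
    rw [residualGradient_eq_smul hmax ha, real_inner_smul_left, inner_sub_right, hv,
      inner_smul_right, real_inner_self_eq_norm_sq, ha] at hle
    exact le_of_mul_le_mul_left (by linarith) hr

end SphereMax

section NearlyOrthonormal

open scoped InnerProductSpace Matrix.Norms.L2Operator

variable {E J : Type*} [NormedAddCommGroup E] [InnerProductSpace ℝ E] [Fintype J] {w : J → E}

/-- The analysis map of a family of vectors: the coordinates of `analysis w v` are the inner
products of `v` with the members of the family. -/
def analysis (w : J → E) (v : E) : EuclideanSpace ℝ J := WithLp.toLp 2 fun j => ⟪w j, v⟫_ℝ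

/-- The synthesis map of a family of vectors, adjoint to `analysis w`. -/
def synthesis (w : J → E) (e : EuclideanSpace ℝ J) : E := ∑ j, e j • w j

lemma norm_analysis_sq (w : J → E) (v : E) : ‖analysis w v‖ ^ 2 = ∑ j, ⟪w j, v⟫_ℝ ^ 2 :=
  EuclideanSpace.real_norm_sq_eq _

lemma inner_analysis (w : J → E) (v : E) (e : EuclideanSpace ℝ J) :
    ⟪analysis w v, e⟫_ℝ = ⟪v, synthesis w e⟫_ℝ := by
  simp [analysis, synthesis, PiLp.inner_apply, inner_sum, real_inner_smul_right,
    real_inner_comm v]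

lemma analysis_synthesis (w : J → E) (e : EuclideanSpace ℝ J) :
    analysis w (synthesis w e) = WithLp.toLp 2 (Matrix.gram ℝ w *ᵥ e) := by
  ext i
  simp [analysis, synthesis, Matrix.mulVec, dotProduct, inner_sum, real_inner_smul_right, mul_comm]

variable [DecidableEq J] {δ : ℝ}

lemma norm_analysis_synthesis_sub_le (hw : ‖Matrix.gram ℝ w - 1‖ ≤ δ) (e : EuclideanSpace ℝ J) :
    ‖analysis w (synthesis w e) - e‖ ≤ δ * ‖e‖ := by
  have h := Matrix.l2_opNorm_mulVec (Matrix.gram ℝ w - 1) e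
  rw [Matrix.sub_mulVec, Matrix.one_mulVec] at h
  rw [analysis_synthesis]
  exact h.trans (mul_le_mul_of_nonneg_right hw (norm_nonneg e))

lemma mul_norm_sq_le_norm_synthesis_sq (hw : ‖Matrix.gram ℝ w - 1‖ ≤ δ)
    (e : EuclideanSpace ℝ J) : (1 - δ) * ‖e‖ ^ 2 ≤ ‖synthesis w e‖ ^ 2 := by
  have hinner : ⟪e - analysis w (synthesis w e), e⟫_ℝ = ‖e‖ ^ 2 - ‖synthesis w e‖ ^ 2 := by
    rw [inner_sub_left, inner_analysis, real_inner_self_eq_norm_sq, real_inner_self_eq_norm_sq]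
  have hbound : ⟪e - analysis w (synthesis w e), e⟫_ℝ ≤ δ * ‖e‖ * ‖e‖ := by
    refine (real_inner_le_norm _ _).trans (mul_le_mul_of_nonneg_right ?_ (norm_nonneg e))
    rw [norm_sub_rev]
    exact norm_analysis_synthesis_sub_le hw e
  linarith

lemma abs_inner_synthesis_sub_le (hw : ‖Matrix.gram ℝ w - 1‖ ≤ δ) (hδ : δ ≤ 3 / 4)
    (e : EuclideanSpace ℝ J) (j : J) :
    |⟪w j, synthesis w e⟫_ℝ - e j| ≤ 2 * δ * ‖synthesis w e‖ := by
  have hδ0 : 0 ≤ δ := (norm_nonneg _).trans hw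
  have hnorm : ‖e‖ ≤ 2 * ‖synthesis w e‖ := by
    refine abs_le_of_sq_le_sq' ?_ (by positivity) |>.2
    nlinarith [mul_norm_sq_le_norm_synthesis_sq hw e, sq_nonneg ‖e‖]
  calc |⟪w j, synthesis w e⟫_ℝ - e j| ≤ ‖analysis w (synthesis w e) - e‖ :=
        PiLp.norm_apply_le (analysis w (synthesis w e) - e) j
    _ ≤ δ * ‖e‖ := norm_analysis_synthesis_sub_le hw e
    _ ≤ δ * (2 * ‖synthesis w e‖) := by gcongr
    _ = 2 * δ * ‖synthesis w e‖ := by ring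

lemma mul_norm_sq_le_sum_inner_sq (hw : ‖Matrix.gram ℝ w - 1‖ ≤ δ) (hδ : δ < 1) {v : E}
    (hv : v ∈ Submodule.span ℝ (Set.range w)) :
    (1 - δ) * ‖v‖ ^ 2 ≤ ∑ j, ⟪w j, v⟫_ℝ ^ 2 := by
  obtain ⟨e, rfl⟩ := (Submodule.mem_span_range_iff_exists_fun ℝ).1 hv
  change (1 - δ) * ‖synthesis w (WithLp.toLp 2 e)‖ ^ 2 ≤ _
  rw [← norm_analysis_sq]
  change _ ≤ ‖analysis w (synthesis w (WithLp.toLp 2 e))‖ ^ 2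
  generalize WithLp.toLp 2 e = e
  set v := synthesis w e
  rcases (norm_nonneg v).eq_or_lt with hv0 | hvpos
  · rw [← hv0]; simp
  have hcs : ‖v‖ ^ 2 ≤ ‖analysis w v‖ * ‖e‖ := by
    rw [← real_inner_self_eq_norm_sq, ← inner_analysis]
    exact real_inner_le_norm _ _
  have hlow : (1 - δ) * ‖e‖ ^ 2 ≤ ‖v‖ ^ 2 := mul_norm_sq_le_norm_synthesis_sq hw e
  have hprod : (1 - δ) * ‖v‖ ^ 2 * ‖v‖ ^ 2 ≤ ‖analysis w v‖ ^ 2 * ‖v‖ ^ 2 :=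
    calc (1 - δ) * ‖v‖ ^ 2 * ‖v‖ ^ 2 = (1 - δ) * (‖v‖ ^ 2) ^ 2 := by ring
      _ ≤ (1 - δ) * (‖analysis w v‖ * ‖e‖) ^ 2 := by gcongr
      _ = ‖analysis w v‖ ^ 2 * ((1 - δ) * ‖e‖ ^ 2) := by ring
      _ ≤ ‖analysis w v‖ ^ 2 * ‖v‖ ^ 2 := by gcongr
  exact le_of_mul_le_mul_right hprod (by positivity)

lemma abs_inner_le_of_ne (hw : ‖Matrix.gram ℝ w - 1‖ ≤ δ) {i j : J} (hij : i ≠ j) :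
    |⟪w i, w j⟫_ℝ| ≤ δ := by
  have hcoord := (PiLp.norm_apply_le _ i).trans
    (norm_analysis_synthesis_sub_le hw (EuclideanSpace.single j 1))
  simpa [analysis, synthesis, hij] using hcoord

lemma eq_zero_of_sum_mul_inner_sq_le (hw : ‖Matrix.gram ℝ w - 1‖ ≤ δ) (hδ : δ < 1) {v : E}
    (hv : v ∈ Submodule.span ℝ (Set.range w)) {μ : ℝ} (hμ : 0 ≤ μ) {n : J → ℝ}
    (hn : ∀ j, μ < (1 - δ) * n j ^ 2) (hle : ∑ j, (n j * ⟪w j, v⟫_ℝ) ^ 2 ≤ μ * ‖v‖ ^ 2) :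
    v = 0 := by
  have hframe := mul_norm_sq_le_sum_inner_sq hw hδ hv
  have hδ0 : 0 < 1 - δ := sub_pos.2 hδ
  have hinner : ∀ j, ⟪w j, v⟫_ℝ = 0 := by
    by_contra! ⟨i, hi⟩
    have hlt : μ * ∑ j, ⟪w j, v⟫_ℝ ^ 2 < (1 - δ) * ∑ j, (n j * ⟪w j, v⟫_ℝ) ^ 2 := by
      simp only [Finset.mul_sum, mul_pow, ← mul_assoc]
      refine Finset.sum_lt_sum
        (fun j _ => mul_le_mul_of_nonneg_right (hn j).le (sq_nonneg _)) ⟨i, Finset.mem_univ i, ?_⟩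
      exact mul_lt_mul_of_pos_right (hn i) (by positivity)
    nlinarith [mul_le_mul_of_nonneg_left hframe hμ, mul_le_mul_of_nonneg_left hle hδ0.le]
  simp only [hinner, ne_eq, OfNat.ofNat_ne_zero, not_false_eq_true, zero_pow,
    Finset.sum_const_zero] at hframe
  by_contra hne
  have : 0 < ‖v‖ := norm_pos_iff.2 hne
  exact hframe.not_gt (by positivity)

end NearlyOrthonormal

section SoftThreshold
open Filter Topology

variable {lam t : ℝ}

lemma realSign_mul_abs (t : ℝ) : Real.sign t * |t| = t := by
  rcases lt_trichotomy t 0 with h | rfl | h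
  · rw [Real.sign_of_neg h, abs_of_neg h]; ring
  · simp
  · rw [Real.sign_of_pos h, abs_of_pos h, one_mul]

lemma realSign_mul_self (t : ℝ) : Real.sign t * t = |t| := by
  rcases lt_trichotomy t 0 with h | rfl | h
  · rw [Real.sign_of_neg h, abs_of_neg h]; ring
  · simp
  · rw [Real.sign_of_pos h, abs_of_pos h, one_mul]

lemma realSign_mul_realSign (ht : t ≠ 0) : Real.sign t * Real.sign t = 1 := by
  rcases Real.sign_apply_eq_of_ne_zero t ht with h | h <;> rw [h] <;> norm_num

lemma abs_realSign_le_one (t : ℝ) : |Real.sign t| ≤ 1 := by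
  rcases Real.sign_apply_eq t with h | h | h <;> rw [h] <;> norm_num

lemma soft_of_abs_le (h : |t| ≤ lam) : soft lam t = 0 := by
  rw [soft, max_eq_right (sub_nonpos.2 h), mul_zero]

lemma soft_of_le_abs (h : lam ≤ |t|) : soft lam t = t - lam * Real.sign t := by
  rw [soft, max_eq_left (sub_nonneg.2 h), mul_sub, realSign_mul_abs, mul_comm]

lemma soft_neg (lam t : ℝ) : soft lam (-t) = -soft lam t := by
  rw [soft, soft, Real.sign_neg, abs_neg, neg_mul]

lemma soft_ne_zero_iff (hlam : 0 ≤ lam) : soft lam t ≠ 0 ↔ lam < |t| := by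
  refine ⟨fun h => lt_of_not_ge fun hle => h (soft_of_abs_le hle), fun h => ?_⟩
  have ht : t ≠ 0 := abs_pos.1 (hlam.trans_lt h)
  rw [soft, max_eq_left (sub_nonneg.2 h.le)]
  exact mul_ne_zero (mt Real.sign_eq_zero_iff.1 ht) (sub_pos.2 h).ne'

lemma soft_eventuallyEq (hlam : 0 ≤ lam) (h : lam < |t|) :
    soft lam =ᶠ[𝓝 t] fun u => u - lam * Real.sign t := by
  have hsign : ∀ᶠ u in 𝓝 t, Real.sign u = Real.sign t := by
    rcases (abs_pos.1 (hlam.trans_lt h)).lt_or_gt with ht | ht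
    · filter_upwards [eventually_lt_nhds ht] with u hu
      rw [Real.sign_of_neg hu, Real.sign_of_neg ht]
    · filter_upwards [eventually_gt_nhds ht] with u hu
      rw [Real.sign_of_pos hu, Real.sign_of_pos ht]
  filter_upwards [hsign, continuous_abs.continuousAt.eventually_const_lt h] with u hu hlt
  rw [soft_of_le_abs hlt.le, hu]

lemma abs_sub_soft_le (hlam : 0 ≤ lam) (t : ℝ) : |t - soft lam t| ≤ lam := by
  rcases le_total |t| lam with h | h
  · rwa [soft_of_abs_le h, sub_zero]
  · rw [soft_of_le_abs h, sub_sub_cancel, abs_mul, abs_of_nonneg hlam]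
    exact mul_le_of_le_one_right hlam (abs_realSign_le_one t)

lemma abs_soft (hlam : 0 ≤ lam) (t : ℝ) : |soft lam t| = max (|t| - lam) 0 := by
  rcases eq_or_ne t 0 with rfl | ht
  · simp [soft, hlam]
  · rw [soft, abs_mul, abs_of_nonneg (le_max_right (|t| - lam) 0)]
    rcases Real.sign_apply_eq_of_ne_zero t ht with hs | hs <;> simp [hs]

lemma sub_soft_mul_soft (hlam : 0 ≤ lam) (t : ℝ) :
    (t - soft lam t) * soft lam t = lam * |soft lam t| := by
  rcases le_or_gt |t| lam with h | h
  · simp [soft_of_abs_le h]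
  have ht : t ≠ 0 := abs_pos.1 (hlam.trans_lt h)
  rw [abs_soft hlam, max_eq_left (sub_nonneg.2 h.le), soft_of_le_abs h.le]
  linear_combination lam * realSign_mul_self t - lam ^ 2 * realSign_mul_realSign ht

lemma soft_mul_self_pos (hlam : 0 ≤ lam) (h : lam < |t|) : 0 < soft lam t * t := by
  have hne : 0 < |soft lam t| := abs_pos.2 ((soft_ne_zero_iff hlam).2 h)
  have hsq : 0 < soft lam t ^ 2 := by rw [← sq_abs]; positivity
  have hmul := sub_soft_mul_soft hlam t
  nlinarith [mul_nonneg hlam hne.le]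

lemma half_sq_add_half_sq_sub_soft_le (hlam : 0 ≤ lam) (t x : ℝ) :
    -(soft lam t ^ 2 / 2) + (x - soft lam t) ^ 2 / 2 ≤ x ^ 2 / 2 - t * x + lam * |x| := by
  have hsub : (t - soft lam t) * x ≤ lam * |x| :=
    calc (t - soft lam t) * x ≤ |t - soft lam t| * |x| := by rw [← abs_mul]; exact le_abs_self _
      _ ≤ lam * |x| := by gcongr; exact abs_sub_soft_le hlam t
  linarith

lemma eval_soft (hlam : 0 ≤ lam) (t : ℝ) :
    soft lam t ^ 2 / 2 - t * soft lam t + lam * |soft lam t| = -(soft lam t ^ 2 / 2) := by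
  linear_combination -sub_soft_mul_soft hlam t

end SoftThreshold

section ThresholdedEnergy

open scoped InnerProductSpace Matrix.Norms.L2Operator

open NormedSpace Filter Topology Metric

variable {E J : Type*} [NormedAddCommGroup E] [InnerProductSpace ℝ E] {a : E} {lam : ℝ}

lemma norm_mul_inner_normalize (x y : E) : ‖x‖ * ⟪normalize x, y⟫_ℝ = ⟪x, y⟫_ℝ := by
  rw [← real_inner_smul_left, norm_smul_normalize]

lemma abs_inner_le_one {x y : E} (hx : ‖x‖ ≤ 1) (hy : ‖y‖ ≤ 1) : |⟪x, y⟫_ℝ| ≤ 1 :=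
  (abs_real_inner_le_norm x y).trans (mul_le_one₀ hx (norm_nonneg y) hy)

lemma eq_sign_smul_normalize {x : E} (ha : ‖a‖ = 1) (h : ⟪x, a⟫_ℝ ≠ 0)
    (hx : normalize x = ⟪normalize x, a⟫_ℝ • a) : a = Real.sign ⟪x, a⟫_ℝ • normalize x := by
  have hx_eq : x = ⟪x, a⟫_ℝ • a := by
    rw [← norm_mul_inner_normalize, mul_smul, ← hx, norm_smul_normalize]
  have hnorm : ‖x‖ = |⟪x, a⟫_ℝ| := by
    conv_lhs => rw [hx_eq, norm_smul, ha, mul_one, Real.norm_eq_abs]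
  refine smul_right_injective E (hnorm ▸ abs_ne_zero.2 h : ‖x‖ ≠ 0) ?_
  calc ‖x‖ • a = Real.sign ⟪x, a⟫_ℝ • ⟪x, a⟫_ℝ • a := by rw [smul_smul, realSign_mul_self, hnorm]
    _ = Real.sign ⟪x, a⟫_ℝ • ‖x‖ • normalize x := by rw [← hx_eq, norm_smul_normalize]
    _ = ‖x‖ • Real.sign ⟪x, a⟫_ℝ • normalize x := smul_comm _ _ _

-- Here `n = ‖b j‖`, `T = |⟪normalize (b j), a⟫|` and `μ` is the Lagrange multiplier at `a`.
lemma lt_mul_sq_of_mul_sub_le {n T μ : ℝ} (hlam : 0 < lam) (hn : 0 < n) (hn1 : n ≤ 1)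
    (hT1 : T ≤ 1) (hlt : lam < n * T)
    (hle : μ * T - n * (n * T - lam) ≤ lam ^ 2 / 3 * μ) : μ < (1 - lam ^ 2 / 6) * n ^ 2 := by
  have hnT : n * T ≤ 1 := by nlinarith
  have hgap : n * T - lam < (1 - lam ^ 2 / 6) * (n * T - n * (lam ^ 2 / 3)) := by
    have hlam2 : lam ^ 2 < lam := by nlinarith
    have hnT_sq : lam ^ 2 * (n * T) ≤ lam ^ 2 := mul_le_of_le_one_right (sq_nonneg lam) hnT
    have hn_sq : lam ^ 2 * n ≤ lam ^ 2 := mul_le_of_le_one_right (sq_nonneg lam) hn1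
    have hn_four : 0 ≤ lam ^ 4 * n := by positivity
    linarith
  have hpos : 0 < n * T - n * (lam ^ 2 / 3) := by nlinarith
  by_contra! hge
  have hle_mul : μ * (n * T - n * (lam ^ 2 / 3)) ≤ n ^ 2 * (n * T - lam) := by
    linarith [mul_le_mul_of_nonneg_left hle hn.le]
  nlinarith [mul_le_mul_of_nonneg_right hge hpos.le, mul_lt_mul_of_pos_left hgap (pow_pos hn 2)]

variable [Fintype J] {b : J → E} {c : J → ℝ}

lemma residualGradient_eq_synthesis (b : J → E) (c : J → ℝ) (x : E) :
    residualGradient b c x = synthesis (fun j => normalize (b j))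
      (WithLp.toLp 2 fun j => ‖b j‖ * (⟪b j, x⟫_ℝ - c j)) := by
  refine Finset.sum_congr rfl fun j _ => ?_
  nth_rw 2 [← norm_smul_normalize (b j)]
  rw [smul_smul, mul_comm]

lemma inner_residualGradient_pos [Nonempty J] (hlam : 0 ≤ lam)
    (hc : ∀ j, ⟪b j, a⟫_ℝ - c j = soft lam ⟪b j, a⟫_ℝ) (hlt : ∀ j, lam < |⟪b j, a⟫_ℝ|) :
    0 < ⟪residualGradient b c a, a⟫_ℝ := by
  simp only [residualGradient, sum_inner, real_inner_smul_left, hc]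
  exact Finset.sum_pos (fun j _ => soft_mul_self_pos hlam (hlt j)) Finset.univ_nonempty

lemma isLocalMaxOn_sum_residual_sq {I : Set J} {s : Set E} (hlam : 0 ≤ lam)
    (hI : ∀ i, i ∈ I ↔ lam < |⟪b i, a⟫_ℝ|)
    (hmax : IsLocalMaxOn (fun x => ∑ i, soft lam ⟪b i, x⟫_ℝ ^ 2) s a) :
    IsLocalMaxOn (fun x => ∑ j : I, (⟪b j, x⟫_ℝ - lam * Real.sign ⟪b j, a⟫_ℝ) ^ 2) s a := by
  have hactive : ∀ᶠ x in 𝓝[s] a, ∀ j : I,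
      soft lam ⟪b j, x⟫_ℝ = ⟪b j, x⟫_ℝ - lam * Real.sign ⟪b j, a⟫_ℝ :=
    Filter.eventually_all.2 fun j =>
      (by fun_prop : Continuous fun x => ⟪b j, x⟫_ℝ).continuousWithinAt.eventually
        (soft_eventuallyEq hlam ((hI j).1 j.2))
  have hsubset : ∀ x, ∑ j : I, soft lam ⟪b j, x⟫_ℝ ^ 2 ≤ ∑ i, soft lam ⟪b i, x⟫_ℝ ^ 2 := by
    intro x
    rw [Finset.sum_set_coe (s := I) (f := fun i => soft lam ⟪b i, x⟫_ℝ ^ 2)]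
    exact Finset.sum_le_univ_sum_of_nonneg fun i => sq_nonneg _
  have hinactive : ∑ i, soft lam ⟪b i, a⟫_ℝ ^ 2 = ∑ j : I, soft lam ⟪b j, a⟫_ℝ ^ 2 := by
    rw [Finset.sum_set_coe (s := I) (f := fun i => soft lam ⟪b i, a⟫_ℝ ^ 2)]
    refine (Finset.sum_subset (Finset.subset_univ _) fun i _ hi => ?_).symm
    rw [Set.mem_toFinset, hI, not_lt] at hi
    rw [soft_of_abs_le hi, zero_pow two_ne_zero]
  filter_upwards [hmax, hactive] with x hx hxI
  calc ∑ j : I, (⟪b j, x⟫_ℝ - lam * Real.sign ⟪b j, a⟫_ℝ) ^ 2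
      = ∑ j : I, soft lam ⟪b j, x⟫_ℝ ^ 2 := by simp only [hxI]
    _ ≤ ∑ j : I, soft lam ⟪b j, a⟫_ℝ ^ 2 := ((hsubset x).trans hx).trans_eq hinactive
    _ = ∑ j : I, (⟪b j, a⟫_ℝ - lam * Real.sign ⟪b j, a⟫_ℝ) ^ 2 := by
      simp only [fun j : I => soft_of_le_abs ((hI j).1 j.2).le]

variable [DecidableEq J]

lemma multiplier_lt (hlam : 0 < lam) (ha : ‖a‖ = 1) (hb : ∀ j, ‖b j‖ ≤ 1)
    (hgram : ‖Matrix.gram ℝ (fun j => normalize (b j)) - 1‖ ≤ lam ^ 2 / 6)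
    (hc : ∀ j, ⟪b j, a⟫_ℝ - c j = soft lam ⟪b j, a⟫_ℝ) {μ : ℝ} (hμ : 0 < μ)
    (hcrit : residualGradient b c a = μ • a) {j : J} (hlt : lam < |⟪b j, a⟫_ℝ|) :
    μ < (1 - lam ^ 2 / 6) * ‖b j‖ ^ 2 := by
  have hinner : |⟪b j, a⟫_ℝ| = ‖b j‖ * |⟪normalize (b j), a⟫_ℝ| := by
    rw [← norm_mul_inner_normalize, abs_mul, abs_norm]
  have hbpos : 0 < ‖b j‖ := by
    refine norm_pos_iff.2 fun h0 => (hlam.trans hlt).ne' ?_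
    rw [h0, inner_zero_left, abs_zero]
  have hT1 : |⟪normalize (b j), a⟫_ℝ| ≤ 1 :=
    abs_inner_le_one (norm_normalize_eq_one_iff.2 (norm_pos_iff.1 hbpos)).le ha.le
  have hlam1 : lam < 1 := hlt.trans_le (abs_inner_le_one (hb j) ha.le)
  have hδ : lam ^ 2 / 6 ≤ 3 / 4 := by nlinarith
  have hdist := abs_inner_synthesis_sub_le hgram hδ
    (WithLp.toLp 2 fun j => ‖b j‖ * (⟪b j, a⟫_ℝ - c j)) j
  rw [← residualGradient_eq_synthesis, hcrit, norm_smul, ha, inner_smul_right,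
    Real.norm_of_nonneg hμ.le] at hdist
  simp only [hc] at hdist
  have habs := (abs_sub_abs_le_abs_sub _ _).trans hdist
  rw [abs_mul, abs_mul, abs_soft hlam.le, abs_of_pos hμ, abs_norm,
    max_eq_left (sub_nonneg.2 hlt.le), hinner] at habs
  exact lt_mul_sq_of_mul_sub_le hlam hbpos (hb j) hT1 (hinner ▸ hlt) (by linarith)

theorem normalize_eq_inner_smul_of_isLocalMaxOn (hlam : 0 < lam) (ha : ‖a‖ = 1)
    (hb : ∀ j, ‖b j‖ ≤ 1)
    (hgram : ‖Matrix.gram ℝ (fun j => normalize (b j)) - 1‖ ≤ lam ^ 2 / 6)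
    (hc : ∀ j, ⟪b j, a⟫_ℝ - c j = soft lam ⟪b j, a⟫_ℝ) (hlt : ∀ j, lam < |⟪b j, a⟫_ℝ|)
    (hmax : IsLocalMaxOn (fun x => ∑ j, (⟪b j, x⟫_ℝ - c j) ^ 2) (sphere 0 1) a) (j : J) :
    normalize (b j) = ⟪normalize (b j), a⟫_ℝ • a := by
  have : Nonempty J := ⟨j⟩
  set w := fun j => normalize (b j)
  set μ := ⟪residualGradient b c a, a⟫_ℝ
  have hcrit : residualGradient b c a = μ • a := residualGradient_eq_smul hmax ha
  have hμ : 0 < μ := inner_residualGradient_pos hlam.le hc hlt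
  have hμlt : ∀ i, μ < (1 - lam ^ 2 / 6) * ‖b i‖ ^ 2 := fun i =>
    multiplier_lt hlam ha hb hgram hc hμ hcrit (hlt i)
  have hδ : lam ^ 2 / 6 < 1 := by
    by_contra! h
    nlinarith [hμlt j, sq_nonneg ‖b j‖]
  have haspan : a ∈ Submodule.span ℝ (Set.range w) := by
    rw [← inv_smul_smul₀ hμ.ne' a, ← hcrit, residualGradient_eq_synthesis]
    exact Submodule.smul_mem _ _ (Submodule.sum_mem _ fun i _ =>
      Submodule.smul_mem _ _ (Submodule.subset_span ⟨i, rfl⟩))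
  refine sub_eq_zero.1 (eq_zero_of_sum_mul_inner_sq_le hgram hδ ?_ hμ.le hμlt ?_)
  · exact Submodule.sub_mem _ (Submodule.subset_span ⟨j, rfl⟩) (Submodule.smul_mem _ _ haspan)
  · simp only [w, norm_mul_inner_normalize]
    refine sum_inner_sq_le_of_isLocalMaxOn hmax ha ?_
    rw [inner_sub_right, inner_smul_right, real_inner_self_eq_norm_sq, ha, real_inner_comm]
    ring

theorem exists_eq_sign_smul_normalize {I : Set J} (hlam : 0 < lam) (ha : ‖a‖ = 1)
    (hb : ∀ j, ‖b j‖ ≤ 1) (hI : ∀ j, j ∈ I ↔ lam < |⟪b j, a⟫_ℝ|) (hne : I.Nonempty)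
    (hgram : ‖Matrix.gram ℝ (fun j : I => normalize (b j)) - 1‖ ≤ lam ^ 2 / 6)
    (hmax : IsLocalMaxOn (fun x => ∑ j, soft lam ⟪b j, x⟫_ℝ ^ 2) (sphere 0 1) a) :
    ∃ τ, I = {τ} ∧ a = Real.sign ⟪b τ, a⟫_ℝ • normalize (b τ) := by
  have hparallel : ∀ j ∈ I, a = Real.sign ⟪b j, a⟫_ℝ • normalize (b j) := fun j hj =>
    eq_sign_smul_normalize ha (abs_pos.1 (hlam.trans ((hI j).1 hj)))
      (normalize_eq_inner_smul_of_isLocalMaxOn hlam ha (b := fun i : I => b i) (fun i => hb i)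
        hgram (fun i => (soft_of_le_abs ((hI i).1 i.2).le).symm) (fun i => (hI i).1 i.2)
        (isLocalMaxOn_sum_residual_sq hlam.le hI hmax) ⟨j, hj⟩)
  obtain ⟨τ, hτ⟩ := hne
  refine ⟨τ, Set.eq_singleton_iff_unique_mem.2 ⟨hτ, fun j hj => ?_⟩, hparallel τ hτ⟩
  by_contra hjτ
  have hlam1 : lam < 1 := ((hI τ).1 hτ).trans_le (abs_inner_le_one (hb τ) ha.le)
  have hoverlap : |⟪normalize (b j), normalize (b τ)⟫_ℝ| ≤ lam ^ 2 / 6 :=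
    abs_inner_le_of_ne hgram (i := (⟨j, hj⟩ : I)) (j := ⟨τ, hτ⟩) (by simpa using hjτ)
  have hself : (1 : ℝ) ≤ |⟪normalize (b j), normalize (b τ)⟫_ℝ| :=
    calc (1 : ℝ) = |⟪a, a⟫_ℝ| := by rw [real_inner_self_eq_norm_sq, ha, one_pow, abs_one]
      _ = |Real.sign ⟪b j, a⟫_ℝ| * |Real.sign ⟪b τ, a⟫_ℝ| *
          |⟪normalize (b j), normalize (b τ)⟫_ℝ| := by
        conv_lhs => rw [congrArg₂ (inner ℝ) (hparallel j hj) (hparallel τ hτ)]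
        rw [real_inner_smul_left, real_inner_smul_right, ← mul_assoc, abs_mul, abs_mul]
      _ ≤ |⟪normalize (b j), normalize (b τ)⟫_ℝ| :=
        mul_le_of_le_one_left (abs_nonneg _)
          (mul_le_one₀ (abs_realSign_le_one _) (abs_nonneg _) (abs_realSign_le_one _))
  nlinarith

end ThresholdedEnergy

section EuclideanBridge

open scoped InnerProductSpace Matrix.Norms.L2Operator

variable {α β : Type*} [Fintype α]

lemma l2sq_nonneg (v : α → ℝ) : 0 ≤ l2sq v := Finset.sum_nonneg fun _ _ => sq_nonneg _

lemma l2sq_eq_dotp (v : α → ℝ) : l2sq v = dotp v v := Finset.sum_congr rfl fun i _ => sq (v i)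

lemma dotp_comm (u v : α → ℝ) : dotp u v = dotp v u :=
  Finset.sum_congr rfl fun i _ => mul_comm (u i) (v i)

lemma norm_toLp_eq_l2norm (v : α → ℝ) : ‖WithLp.toLp 2 v‖ = l2norm v := by
  simp [EuclideanSpace.norm_eq, l2norm, l2sq]

lemma inner_toLp_eq_dotp (u v : α → ℝ) : ⟪WithLp.toLp 2 u, WithLp.toLp 2 v⟫_ℝ = dotp u v := by
  simp [PiLp.inner_apply, dotp, mul_comm]

lemma normalize_toLp (v : α → ℝ) :
    NormedSpace.normalize (WithLp.toLp 2 v) = WithLp.toLp 2 fun i => v i / l2norm v := by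
  ext i
  simp [NormedSpace.normalize, norm_toLp_eq_l2norm, div_eq_inv_mul]

lemma dotp_normalized (ε : ℝ) (v : α → ℝ) :
    dotp v (fun i => ε * v i / l2norm v) = ε * l2norm v := by
  have hsum : dotp v (fun i => ε * v i / l2norm v) = ε * (l2sq v / l2norm v) := by
    simp only [dotp, l2sq, Finset.sum_div, Finset.mul_sum]
    exact Finset.sum_congr rfl fun i _ => by ring
  rw [hsum, l2norm, Real.div_sqrt]

lemma norm_eq_opNorm [Fintype β] [DecidableEq β] (A : Matrix α β ℝ) : ‖A‖ = opNorm A := by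
  rw [Matrix.l2_opNorm_def, opNorm, ← ContinuousLinearMap.sSup_sphere_eq_norm]
  congr 1
  ext c
  constructor
  · rintro ⟨v, hv, rfl⟩
    refine ⟨v.ofLp, ?_, ?_⟩
    · rw [← norm_toLp_eq_l2norm]; simpa using hv
    · rw [← norm_toLp_eq_l2norm]; rfl
  · rintro ⟨v, hv, rfl⟩
    refine ⟨WithLp.toLp 2 v, ?_, ?_⟩
    · rw [mem_sphere_zero_iff_norm, norm_toLp_eq_l2norm, hv]
    · rw [← norm_toLp_eq_l2norm]; rfl

lemma norm_gram_normalize_sub_one_eq_opNorm [Fintype β] [DecidableEq β] (w : β → α → ℝ) :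
    ‖Matrix.gram ℝ (fun j => NormedSpace.normalize (WithLp.toLp 2 (w j))) - 1‖ =
      opNorm ((Matrix.of fun i j => w j i / l2norm (w j))ᵀ *
        (Matrix.of fun i j => w j i / l2norm (w j)) - 1) := by
  rw [norm_eq_opNorm]
  congr 2
  ext i j
  rw [Matrix.gram_apply, normalize_toLp, normalize_toLp, inner_toLp_eq_dotp]
  rfl

end EuclideanBridge

section Deconvolution

open scoped InnerProductSpace

variable {k m : ℕ}

lemma dotp_pad (hkm : k ≤ m) (u : Fin m → ℝ) (a : Fin k → ℝ) :
    dotp u (pad k m a) = dotp (unpad hkm u) a := by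
  refine (Fintype.sum_of_injective (Fin.castLE hkm) (Fin.castLE_injective hkm) _ _
    (fun i hi => ?_) fun j => ?_).symm
  · have hki : ¬ (i : ℕ) < k := fun h => hi ⟨⟨i, h⟩, rfl⟩
    simp [pad, hki]
  · simp [pad, unpad]

lemma unpad_pad (hkm : k ≤ m) (a : Fin k → ℝ) : unpad hkm (pad k m a) = a := by
  ext j
  simp [unpad, pad]

lemma l2sq_pad (hkm : k ≤ m) (a : Fin k → ℝ) : l2sq (pad k m a) = l2sq a := by
  rw [l2sq_eq_dotp, dotp_pad hkm, unpad_pad, l2sq_eq_dotp]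

lemma l2sq_unpad_le (hkm : k ≤ m) (v : Fin m → ℝ) : l2sq (unpad hkm v) ≤ l2sq v := by
  change ∑ j, v (Fin.castLEEmb hkm j) ^ 2 ≤ ∑ i, v i ^ 2
  rw [← Finset.sum_map Finset.univ (Fin.castLEEmb hkm) fun i => v i ^ 2]
  exact Finset.sum_le_univ_sum_of_nonneg fun i => sq_nonneg _

variable [NeZero m]

lemma coe_idx (t : ℤ) : ((idx m t : ℕ) : ℤ) = t % m :=
  Int.toNat_of_nonneg (Int.emod_nonneg t (by exact_mod_cast NeZero.ne m))

lemma idx_coe (i : Fin m) : idx m (i : ℤ) = i := by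
  refine Fin.ext (Nat.cast_injective (R := ℤ) ?_)
  rw [coe_idx, Int.emod_eq_of_lt (by positivity) (by exact_mod_cast i.2)]

lemma idx_idx_add (s t : ℤ) : idx m ((idx m s : ℕ) + t) = idx m (s + t) := by
  refine Fin.ext (Nat.cast_injective (R := ℤ) ?_)
  rw [coe_idx, coe_idx, coe_idx, Int.emod_add_emod]

variable (m) in
/-- The permutation `i ↦ (i - τ) mod m` of the indices, which underlies `cshift τ`. -/
def shiftPerm (τ : ℤ) : Equiv.Perm (Fin m) where
  toFun i := idx m (i - τ)
  invFun i := idx m (i + τ)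
  left_inv i := by dsimp only; rw [idx_idx_add, sub_add_cancel, idx_coe]
  right_inv i := by dsimp only; rw [sub_eq_add_neg, idx_idx_add, add_neg_cancel_right, idx_coe]

lemma dotp_cshift (τ : ℤ) (u v : Fin m → ℝ) : dotp (cshift τ u) v = dotp u (cshift (-τ) v) := by
  refine Fintype.sum_equiv (shiftPerm m τ) _ _ fun i => ?_
  have hv : cshift (-τ) v (shiftPerm m τ i) = v i := by
    rw [cshift, sub_neg_eq_add]
    exact congrArg v ((shiftPerm m τ).left_inv i)
  rw [hv]
  rfl

lemma l2sq_cshift (τ : ℤ) (v : Fin m → ℝ) : l2sq (cshift τ v) = l2sq v :=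
  Equiv.sum_comp (shiftPerm m τ) fun i => v i ^ 2

lemma l2sq_shiftTrunc_le (hkm : k ≤ m) (a0 : Fin k → ℝ) (τ : Fin m) :
    l2sq (shiftTrunc hkm a0 τ) ≤ l2sq a0 :=
  (l2sq_unpad_le hkm _).trans_eq (by rw [l2sq_cshift, l2sq_pad hkm])

lemma rcirc_transpose_mulVec (a0 : Fin k → ℝ) (v : Fin m → ℝ) (i : Fin m) :
    ((rcirc k m a0)ᵀ *ᵥ v) i = dotp (cshift (-(i : ℤ)) (pad k m a0)) v := rfl

lemma rcirc_transpose_mulVec_pad (hkm : k ≤ m) (a0 a : Fin k → ℝ) (i : Fin m) :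
    ((rcirc k m a0)ᵀ *ᵥ pad k m a) i = dotp (shiftTrunc hkm a0 i) a := by
  rw [rcirc_transpose_mulVec, dotp_pad hkm, shiftTrunc]

lemma dotp_conv_pad (w x : Fin m → ℝ) (a0 : Fin k → ℝ) :
    dotp (conv w x) (pad k m a0) = dotp ((rcirc k m a0)ᵀ *ᵥ w) x := by
  calc dotp (conv w x) (pad k m a0)
      = ∑ j : Fin m, dotp (cshift (j : ℤ) w) (pad k m a0) * x j := by
        simp only [dotp, conv, circ, Matrix.mulVec, dotProduct, Matrix.of_apply, Finset.sum_mul]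
        rw [Finset.sum_comm]
        exact Finset.sum_congr rfl fun _ _ => Finset.sum_congr rfl fun _ _ => mul_right_comm _ _ _
    _ = dotp ((rcirc k m a0)ᵀ *ᵥ w) x := by
        refine Finset.sum_congr rfl fun j _ => ?_
        rw [rcirc_transpose_mulVec, dotp_cshift, dotp_comm]

lemma phiHatInner_eq_sum (lam : ℝ) (a0 a : Fin k → ℝ) (x : Fin m → ℝ) :
    phiHatInner k m lam a0 a x = l2sq (pad k m a0) / 2 +
      ∑ i, (x i ^ 2 / 2 - ((rcirc k m a0)ᵀ *ᵥ pad k m a) i * x i + lam * |x i|) := by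
  rw [phiHatInner, dotp_conv_pad]
  simp only [l1norm, l2sq, dotp, Finset.mul_sum, Finset.sum_div,
    Finset.sum_add_distrib, Finset.sum_sub_distrib]
  ring

variable {lam : ℝ}

lemma phiHatInner_softvec (hlam : 0 ≤ lam) (a0 a : Fin k → ℝ) :
    phiHatInner k m lam a0 a (softvec lam ((rcirc k m a0)ᵀ *ᵥ pad k m a)) =
      l2sq (pad k m a0) / 2 - l2sq (softvec lam ((rcirc k m a0)ᵀ *ᵥ pad k m a)) / 2 := by
  simp only [phiHatInner_eq_sum, softvec, eval_soft hlam, Finset.sum_neg_distrib,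
    ← Finset.sum_div, l2sq]
  ring

lemma phiHatInner_softvec_add_le (hlam : 0 ≤ lam) (a0 a : Fin k → ℝ) (x : Fin m → ℝ) :
    phiHatInner k m lam a0 a (softvec lam ((rcirc k m a0)ᵀ *ᵥ pad k m a)) +
      l2sq (x - softvec lam ((rcirc k m a0)ᵀ *ᵥ pad k m a)) / 2 ≤ phiHatInner k m lam a0 a x := by
  set u := (rcirc k m a0)ᵀ *ᵥ pad k m a
  have hsum : -(l2sq (softvec lam u) / 2) + l2sq (x - softvec lam u) / 2 ≤
      ∑ i, (x i ^ 2 / 2 - u i * x i + lam * |x i|) := by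
    simp only [l2sq, Finset.sum_div, ← Finset.sum_neg_distrib, ← Finset.sum_add_distrib]
    exact Finset.sum_le_sum fun i _ => half_sq_add_half_sq_sub_soft_le hlam (u i) (x i)
  rw [phiHatInner_softvec hlam, phiHatInner_eq_sum]
  linarith

lemma phiHatInner_softvec_lt (hlam : 0 ≤ lam) (a0 a : Fin k → ℝ) {x : Fin m → ℝ}
    (hx : x ≠ softvec lam ((rcirc k m a0)ᵀ *ᵥ pad k m a)) :
    phiHatInner k m lam a0 a (softvec lam ((rcirc k m a0)ᵀ *ᵥ pad k m a)) <
      phiHatInner k m lam a0 a x := by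
  obtain ⟨i, hi⟩ := Function.ne_iff.1 (sub_ne_zero.2 hx)
  have hpos : 0 < l2sq (x - softvec lam ((rcirc k m a0)ᵀ *ᵥ pad k m a)) :=
    Finset.sum_pos' (fun _ _ => sq_nonneg _) ⟨i, Finset.mem_univ i, sq_pos_iff.2 hi⟩
  linarith [phiHatInner_softvec_add_le hlam a0 a x]

lemma phiHat_eq (hlam : 0 ≤ lam) (a0 a : Fin k → ℝ) :
    phiHat k m lam a0 a =
      l2sq (pad k m a0) / 2 - l2sq (softvec lam ((rcirc k m a0)ᵀ *ᵥ pad k m a)) / 2 := by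
  rw [← phiHatInner_softvec hlam]
  refine IsLeast.csInf_eq ⟨Set.mem_range_self _, Set.forall_mem_range.2 fun x => ?_⟩
  linarith [phiHatInner_softvec_add_le hlam a0 a x,
    l2sq_nonneg (x - softvec lam ((rcirc k m a0)ᵀ *ᵥ pad k m a))]

end Deconvolution

section LocalMinimizers

open scoped InnerProductSpace Matrix.Norms.L2Operator

open Metric

variable {k m : ℕ} [NeZero m] {lam : ℝ} {a0 abar : Fin k → ℝ}

lemma l2sq_softvec_rcirc_eq_sum (hkm : k ≤ m) (lam : ℝ) (a0 a : Fin k → ℝ) :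
    l2sq (softvec lam ((rcirc k m a0)ᵀ *ᵥ pad k m a)) =
      ∑ i, soft lam ⟪WithLp.toLp 2 (shiftTrunc hkm a0 i), WithLp.toLp 2 a⟫_ℝ ^ 2 := by
  simp only [l2sq, softvec, rcirc_transpose_mulVec_pad hkm, inner_toLp_eq_dotp]

lemma isLocalMaxOn_sum_soft_sq (hkm : k ≤ m) (hlam : 0 ≤ lam)
    (hlocmin : ∃ ε > (0 : ℝ), ∀ a : Fin k → ℝ, l2norm a = 1 → l2norm (a - abar) < ε →
      phiHat k m lam a0 abar ≤ phiHat k m lam a0 a) :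
    IsLocalMaxOn
      (fun x => ∑ i, soft lam ⟪WithLp.toLp 2 (shiftTrunc hkm a0 i), x⟫_ℝ ^ 2)
      (sphere 0 1) (WithLp.toLp 2 abar) := by
  obtain ⟨ε, hε, hmin⟩ := hlocmin
  filter_upwards [inter_mem_nhdsWithin _ (ball_mem_nhds _ hε)] with x ⟨hx, hdist⟩
  have hle := hmin x.ofLp (by rw [← norm_toLp_eq_l2norm]; simpa using hx)
    (by rw [← norm_toLp_eq_l2norm]; simpa [dist_eq_norm] using hdist)
  rw [phiHat_eq hlam, phiHat_eq hlam, l2sq_softvec_rcirc_eq_sum hkm,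
    l2sq_softvec_rcirc_eq_sum hkm] at hle
  exact (div_le_div_iff_of_pos_right two_pos).1 (sub_le_sub_iff_left _ |>.1 hle)

theorem phiHat_le_of_softvec_eq_zero (hlam : 0 ≤ lam)
    (hzero : softvec lam ((rcirc k m a0)ᵀ *ᵥ pad k m abar) = 0) (a : Fin k → ℝ) :
    phiHat k m lam a0 a ≤ phiHat k m lam a0 abar := by
  have hl2sq : l2sq (0 : Fin m → ℝ) = 0 := by simp [l2sq]
  rw [phiHat_eq hlam, phiHat_eq hlam, hzero, hl2sq]
  linarith [l2sq_nonneg (softvec lam ((rcirc k m a0)ᵀ *ᵥ pad k m a))]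

lemma softvec_eq_single (hkm : k ≤ m) {ε : ℝ} (hε : ε = 1 ∨ ε = -1) {τ : Fin m}
    (hsupp : ∀ i ≠ τ, softvec lam ((rcirc k m a0)ᵀ *ᵥ pad k m abar) i = 0)
    (habar : abar = fun r => ε * shiftTrunc hkm a0 τ r / l2norm (shiftTrunc hkm a0 τ)) :
    softvec lam ((rcirc k m a0)ᵀ *ᵥ pad k m abar) =
      fun i => if i = τ then ε * soft lam (l2norm (shiftTrunc hkm a0 τ)) else 0 := by
  ext i
  split_ifs with hi
  · rw [hi, softvec, rcirc_transpose_mulVec_pad hkm, habar, dotp_normalized]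
    rcases hε with rfl | rfl
    · simp only [one_mul]
    · simp only [neg_one_mul, soft_neg]
  · exact hsupp i hi

theorem exists_eq_normalized_shiftTrunc (hkm : k ≤ m) (hlam : 0 < lam) (ha0 : l2norm a0 ≤ 1)
    (habar : l2norm abar = 1) {I : Set (Fin m)}
    (hI : I = {i | softvec lam ((rcirc k m a0)ᵀ *ᵥ pad k m abar) i ≠ 0}) (hne : I.Nonempty)
    (hgram : ‖Matrix.gram ℝ
      (fun j : I => NormedSpace.normalize (WithLp.toLp 2 (shiftTrunc hkm a0 j))) - 1‖ ≤ lam ^ 2 / 6)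
    (hmax : IsLocalMaxOn
      (fun x => ∑ i, soft lam ⟪WithLp.toLp 2 (shiftTrunc hkm a0 i), x⟫_ℝ ^ 2)
      (sphere 0 1) (WithLp.toLp 2 abar)) :
    ∃ ε : ℝ, (ε = 1 ∨ ε = -1) ∧ ∃ τ : Fin m, I = {τ} ∧
      abar = fun r => ε * shiftTrunc hkm a0 τ r / l2norm (shiftTrunc hkm a0 τ) := by
  set b : Fin m → EuclideanSpace ℝ (Fin k) := fun i => WithLp.toLp 2 (shiftTrunc hkm a0 i)
  have hmem : ∀ i, i ∈ I ↔ lam < |⟪b i, WithLp.toLp 2 abar⟫_ℝ| := fun i => by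
    rw [hI, Set.mem_ofPred_eq, softvec, rcirc_transpose_mulVec_pad hkm, soft_ne_zero_iff hlam.le,
      inner_toLp_eq_dotp]
  have hb : ∀ i, ‖b i‖ ≤ 1 := fun i => by
    rw [norm_toLp_eq_l2norm]
    exact (Real.sqrt_le_sqrt (l2sq_shiftTrunc_le hkm a0 i)).trans ha0
  have hnorm : ‖WithLp.toLp 2 abar‖ = 1 := by rw [norm_toLp_eq_l2norm, habar]
  obtain ⟨τ, hτ, hparallel⟩ := exists_eq_sign_smul_normalize hlam hnorm hb hmem hne hgram hmax
  have hinner : ⟪b τ, WithLp.toLp 2 abar⟫_ℝ ≠ 0 :=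
    abs_pos.1 (hlam.trans ((hmem τ).1 (hτ ▸ Set.mem_singleton τ)))
  refine ⟨_, (Real.sign_apply_eq_of_ne_zero _ hinner).symm, τ, hτ, funext fun r => ?_⟩
  have hcoord := congrArg (fun v : EuclideanSpace ℝ (Fin k) => v r) hparallel
  simpa [b, normalize_toLp, mul_div_assoc] using hcoord

end LocalMinimizers

theorem stmt_0_general {k m : ℕ} [NeZero m] (hkm : k ≤ m) (lam : ℝ) (h0 : 0 < lam)
    (a0 : Fin k → ℝ) (ha0 : l2norm a0 ≤ 1) (abar : Fin k → ℝ) (habar : l2norm abar = 1)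
    (hW : ∀ I : Set (Fin m),
      I = {i | softvec lam (((rcirc k m a0)ᵀ).mulVec (pad k m abar)) i ≠ 0} →
      I.Nonempty →
      opNorm
        ((Matrix.of fun (r : Fin k) (j : ↥I) =>
            shiftTrunc hkm a0 (j : Fin m) r / l2norm (shiftTrunc hkm a0 (j : Fin m)))ᵀ *
          (Matrix.of fun (r : Fin k) (j : ↥I) =>
            shiftTrunc hkm a0 (j : Fin m) r / l2norm (shiftTrunc hkm a0 (j : Fin m))) -
          (1 : Matrix ↥I ↥I ℝ)) ≤ lam ^ 2 / 6)
    (hlocmin : ∃ ε > (0 : ℝ), ∀ a : Fin k → ℝ, l2norm a = 1 → l2norm (a - abar) < ε →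
      phiHat k m lam a0 abar ≤ phiHat k m lam a0 a) :
    (softvec lam (((rcirc k m a0)ᵀ).mulVec (pad k m abar)) = 0 ∧
      ∀ a : Fin k → ℝ, phiHat k m lam a0 a ≤ phiHat k m lam a0 abar) ∨
    (∃ ε : ℝ, (ε = 1 ∨ ε = -1) ∧ ∃ τ : Fin m,
      abar = (fun r => ε * shiftTrunc hkm a0 τ r / l2norm (shiftTrunc hkm a0 τ)) ∧
      ∀ x : Fin m → ℝ,
        x ≠ (fun i => if i = τ then ε * soft lam (l2norm (shiftTrunc hkm a0 τ)) else 0) →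
        phiHatInner k m lam a0 abar
            (fun i => if i = τ then ε * soft lam (l2norm (shiftTrunc hkm a0 τ)) else 0)
          < phiHatInner k m lam a0 abar x) := by
  by_cases hzero : softvec lam ((rcirc k m a0)ᵀ *ᵥ pad k m abar) = 0
  · exact .inl ⟨hzero, phiHat_le_of_softvec_eq_zero h0.le hzero⟩
  obtain ⟨I, hI⟩ : ∃ I, I = {i | softvec lam ((rcirc k m a0)ᵀ *ᵥ pad k m abar) i ≠ 0} := ⟨_, rfl⟩
  have hne : I.Nonempty := hI ▸ Function.ne_iff.1 hzero
  obtain ⟨ε, hε, τ, hτ, heq⟩ := exists_eq_normalized_shiftTrunc hkm h0 ha0 habar hI hne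
    ((norm_gram_normalize_sub_one_eq_opNorm _).trans_le (hW I hI hne))
    (isLocalMaxOn_sum_soft_sq hkm h0.le hlocmin)
  have hsupp : ∀ i ≠ τ, softvec lam ((rcirc k m a0)ᵀ *ᵥ pad k m abar) i = 0 := by
    intro i hi
    by_contra h
    exact hi (by simpa [hτ] using hI.ge h)
  refine .inr ⟨ε, hε, τ, heq, fun x hx => ?_⟩
  rw [← softvec_eq_single hkm hε hsupp heq] at hx ⊢
  exact phiHatInner_softvec_lt h0.le a0 abar hx

/-- under the near-orthogonality condition on shift truncations, every
local minimizer of `φ̂` on the sphere either has `S_λ((Č_{a0})* ι ā) = 0` (and is a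
global maximizer), or is a normalized signed shift truncation of `a0`, with the
inner problem at `ā` uniquely minimized by `ε S_λ(‖ι* s_{−τ}[ι a0]‖₂) e_τ`. -/
theorem stmt_0 {k m : ℕ} [NeZero m] (hkm : k ≤ m) (lam : ℝ) (h0 : 0 < lam)
    (h1 : lam < 1) (a0 : Fin k → ℝ) (ha0 : l2norm a0 = 1)
    (hW : ∀ I : Set (Fin m),
      (∃ a : Fin k → ℝ, l2norm a = 1 ∧
        I = {i | softvec lam (((rcirc k m a0)ᵀ).mulVec (pad k m a)) i ≠ 0}) →
      I.Nonempty →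
      opNorm
        ((Matrix.of fun (r : Fin k) (j : ↥I) =>
            shiftTrunc hkm a0 (j : Fin m) r / l2norm (shiftTrunc hkm a0 (j : Fin m)))ᵀ *
          (Matrix.of fun (r : Fin k) (j : ↥I) =>
            shiftTrunc hkm a0 (j : Fin m) r / l2norm (shiftTrunc hkm a0 (j : Fin m))) -
          (1 : Matrix ↥I ↥I ℝ)) < lam ^ 2 / 6)
    (abar : Fin k → ℝ) (habar : l2norm abar = 1)
    (hlocmin : ∃ ε > (0 : ℝ), ∀ a : Fin k → ℝ, l2norm a = 1 → l2norm (a - abar) < ε →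
      phiHat k m lam a0 abar ≤ phiHat k m lam a0 a) :
    (softvec lam (((rcirc k m a0)ᵀ).mulVec (pad k m abar)) = 0 ∧
      ∀ a : Fin k → ℝ, l2norm a = 1 → phiHat k m lam a0 a ≤ phiHat k m lam a0 abar) ∨
    (∃ ε : ℝ, (ε = 1 ∨ ε = -1) ∧ ∃ τ : Fin m,
      abar = (fun r => ε * shiftTrunc hkm a0 τ r / l2norm (shiftTrunc hkm a0 τ)) ∧
      ∀ x : Fin m → ℝ,
        x ≠ (fun i => if i = τ then ε * soft lam (l2norm (shiftTrunc hkm a0 τ)) else 0) →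
        phiHatInner k m lam a0 abar
            (fun i => if i = τ then ε * soft lam (l2norm (shiftTrunc hkm a0 τ)) else 0)
          < phiHatInner k m lam a0 abar x) := by
  exact (stmt_0_general hkm lam h0 a0 ha0.le abar habar
    (fun I hI hne => (hW I ⟨abar, habar, hI⟩ hne).le) hlocmin).imp_left
    fun ⟨hzero, hmax⟩ => ⟨hzero, fun a _ => hmax a⟩

end
end

section
/- Let A be an n×n real symmetric positive definite matrix and let Δ be an n×n real symmetric matrix with ‖Δ‖_op ≤ λ_min(A)/2, where λ_min(A) is the smallest eigenvalue of A (so A + Δ is positive definite). Then ‖(A + Δ)^{−1/2} − A^{−1/2}‖_op ≤ 2 ‖A‖_op^{1/2} ‖Δ‖_op / λ_min(A)². -/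
open scoped BigOperators Matrix

attribute [local instance 10] Classical.propDecidable

noncomputable section

/-!
For positive scalars, `t⁻¹ - s⁻¹ = (s² - t²) / (s t (s + t))`. This survives as an inequality for
Hermitian matrices `S ≥ s` and `T ≥ t`: since `T⁻¹ - S⁻¹ = T⁻¹ (S - T) S⁻¹`, it is enough that
`(s + t) ‖S - T‖ ≤ ‖S² - T²‖`, and this follows by evaluating the quadratic form of
`S² - T² = S (S - T) + (S - T) T` at a unit eigenvector of `S - T` whose eigenvalue has absolute
value `‖S - T‖`. If `S² = A` has smallest eigenvalue `l` and `T² = A + Δ` with `‖Δ‖ ≤ l / 2`, then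
`T² ≥ l / 2`, and the choice `s = √l`, `t = √(l / 2)` gives the bound because `l ≤ ‖A‖`.
-/

theorem algebraMap_sqrt_le_of_algebraMap_le_mul_self {R : Type*} [TopologicalSpace R] [Ring R]
    [StarRing R] [PartialOrder R] [StarOrderedRing R] [Algebra ℝ R]
    [ContinuousFunctionalCalculus ℝ R IsSelfAdjoint] [NonnegSpectrumClass ℝ R] {a : R} {c : ℝ}
    (ha : 0 ≤ a) (hc : algebraMap ℝ R c ≤ a * a) : algebraMap ℝ R √c ≤ a := by
  have ha_sa : IsSelfAdjoint a := .of_nonneg ha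
  rw [algebraMap_le_iff_le_spectrum]
  intro x hx
  have hx_sq : x ^ 2 ∈ spectrum ℝ (a * a) := sq a ▸ spectrum.pow_mem_pow a 2 hx
  have hc_sq : c ≤ x ^ 2 :=
    (algebraMap_le_iff_le_spectrum ha_sa.mul_self_nonneg.isSelfAdjoint).1 hc _ hx_sq
  exact Real.sqrt_le_iff.2 ⟨spectrum_nonneg_of_nonneg ha hx, hc_sq⟩

theorem sq_le_two_mul_sqrt_mul {l L : ℝ} (hl : 0 ≤ l) (hL : l ≤ L) :
    l ^ 2 ≤ 2 * √L * (√l * √(l / 2) * (√l + √(l / 2))) := by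
  have hsq : √l ^ 2 = l := Real.sq_sqrt hl
  have hsq_half : √(l / 2) ^ 2 = l / 2 := Real.sq_sqrt (by positivity)
  calc l ^ 2 = 2 * √l * (√l * √(l / 2) * √(l / 2)) := by
        linear_combination (-2) * √l ^ 2 * hsq_half - l * hsq
    _ ≤ 2 * √L * (√l * √(l / 2) * (√l + √(l / 2))) := by
        gcongr
        exact le_add_of_nonneg_left (Real.sqrt_nonneg l)

section HermitianMatrix

open scoped ComplexOrder MatrixOrder Matrix.Norms.L2Operator

variable {𝕜 ι : Type*} [RCLike 𝕜] [Fintype ι]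

theorem star_dotProduct_mul_self_sub_mul_self_mulVec {S T : Matrix ι ι 𝕜}
    (hST : (S - T).IsHermitian) {v : ι → 𝕜} {μ : ℝ} (hv : (S - T) *ᵥ v = μ • v) :
    star v ⬝ᵥ ((S * S - T * T) *ᵥ v) = μ • (star v ⬝ᵥ (S *ᵥ v) + star v ⬝ᵥ (T *ᵥ v)) := by
  have hv_left : star v ᵥ* (S - T) = μ • star v := by
    rw [← hST.eq, ← Matrix.star_mulVec, hv, star_smul, star_trivial]
  have hfactor : S * S - T * T = S * (S - T) + (S - T) * T := by noncomm_ring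
  rw [hfactor, Matrix.add_mulVec, dotProduct_add, ← Matrix.mulVec_mulVec, hv, Matrix.mulVec_smul,
    dotProduct_smul, ← Matrix.mulVec_mulVec,
    Matrix.dotProduct_mulVec (star v) (S - T) (T *ᵥ v), hv_left, smul_dotProduct, smul_add]

variable [DecidableEq ι]

theorem le_re_star_dotProduct_mulVec {S : Matrix ι ι 𝕜} {c : ℝ}
    (hS : algebraMap ℝ (Matrix ι ι 𝕜) c ≤ S) {v : ι → 𝕜} (hv : star v ⬝ᵥ v = 1) :
    c ≤ RCLike.re (star v ⬝ᵥ (S *ᵥ v)) := by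
  have h := (Matrix.le_iff.1 hS).re_dotProduct_nonneg v
  rw [Algebra.algebraMap_eq_smul_one, Matrix.sub_mulVec, Matrix.smul_mulVec, Matrix.one_mulVec,
    dotProduct_sub, dotProduct_smul, hv, map_sub, RCLike.smul_re, RCLike.one_re, mul_one] at h
  exact sub_nonneg.1 h

theorem norm_star_dotProduct_mulVec_le (M : Matrix ι ι 𝕜) (v : EuclideanSpace 𝕜 ι) :
    ‖star v.ofLp ⬝ᵥ (M *ᵥ v.ofLp)‖ ≤ ‖M‖ * ‖v‖ ^ 2 := by
  calc ‖star v.ofLp ⬝ᵥ (M *ᵥ v.ofLp)‖ = ‖inner 𝕜 v (WithLp.toLp 2 (M *ᵥ v.ofLp))‖ := by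
        rw [EuclideanSpace.inner_eq_star_dotProduct, dotProduct_comm]
    _ ≤ ‖v‖ * (‖M‖ * ‖v‖) := (norm_inner_le_norm _ _).trans
        (mul_le_mul_of_nonneg_left (Matrix.l2_opNorm_mulVec M v) (norm_nonneg v))
    _ = ‖M‖ * ‖v‖ ^ 2 := by ring

theorem norm_eq_norm_eigenvalues {A : Matrix ι ι 𝕜} (hA : A.IsHermitian) :
    ‖A‖ = ‖hA.eigenvalues‖ := by
  conv_lhs => rw [hA.spectral_theorem]
  rw [Unitary.conjStarAlgAut_apply, ← Unitary.coe_star, CStarRing.norm_mul_coe_unitary,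
    CStarRing.norm_coe_unitary_mul, Matrix.l2_opNorm_diagonal]
  exact ((algebraMap_isometry ℝ 𝕜).postcomp_pi).norm_map_of_map_zero (by ext; simp) _

theorem abs_eigenvalues_le_norm {A : Matrix ι ι 𝕜} (hA : A.IsHermitian) (i : ι) :
    |hA.eigenvalues i| ≤ ‖A‖ :=
  norm_eq_norm_eigenvalues hA ▸ norm_le_pi_norm hA.eigenvalues i

theorem exists_abs_eigenvalues_eq_norm [Nonempty ι] {A : Matrix ι ι 𝕜} (hA : A.IsHermitian) :
    ∃ i, |hA.eigenvalues i| = ‖A‖ := by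
  obtain ⟨i, hi⟩ := Finite.exists_max fun j ↦ |hA.eigenvalues j|
  refine ⟨i, (abs_eigenvalues_le_norm hA i).antisymm ?_⟩
  exact norm_eq_norm_eigenvalues hA ▸ (pi_norm_le_iff_of_nonneg (abs_nonneg _)).2 hi

theorem algebraMap_le_iff_le_eigenvalues {A : Matrix ι ι 𝕜} (hA : A.IsHermitian) {c : ℝ} :
    algebraMap ℝ (Matrix ι ι 𝕜) c ≤ A ↔ ∀ i, c ≤ hA.eigenvalues i := by
  rw [algebraMap_le_iff_le_spectrum hA.isSelfAdjoint, hA.spectrum_real_eq_range_eigenvalues,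
    Set.forall_mem_range]

theorem algebraMap_sub_le_add {A Δ : Matrix ι ι 𝕜} {c d : ℝ}
    (hA : algebraMap ℝ (Matrix ι ι 𝕜) c ≤ A) (hΔ : Δ.IsHermitian) (hd : ‖Δ‖ ≤ d) :
    algebraMap ℝ (Matrix ι ι 𝕜) (c - d) ≤ A + Δ := by
  have hΔ_ge : algebraMap ℝ (Matrix ι ι 𝕜) (-d) ≤ Δ :=
    (algebraMap_le_iff_le_eigenvalues hΔ).2 fun i ↦
      neg_le_of_abs_le ((abs_eigenvalues_le_norm hΔ i).trans hd)
  simpa only [sub_eq_add_neg, map_add] using add_le_add hA hΔ_ge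

theorem star_dotProduct_eigenvectorBasis_self {A : Matrix ι ι 𝕜} (hA : A.IsHermitian) (i : ι) :
    star (hA.eigenvectorBasis i).ofLp ⬝ᵥ (hA.eigenvectorBasis i).ofLp = 1 := by
  rw [dotProduct_comm, ← EuclideanSpace.inner_eq_star_dotProduct]
  exact inner_self_eq_one_of_norm_eq_one (hA.eigenvectorBasis.norm_eq_one i)

theorem add_mul_norm_sub_le {S T : Matrix ι ι 𝕜} {s t : ℝ}
    (hST : (S - T).IsHermitian) (hS : algebraMap ℝ (Matrix ι ι 𝕜) s ≤ S)
    (hT : algebraMap ℝ (Matrix ι ι 𝕜) t ≤ T) :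
    (s + t) * ‖S - T‖ ≤ ‖S * S - T * T‖ := by
  cases isEmpty_or_nonempty ι
  · simp [Subsingleton.elim S T]
  obtain ⟨i, hi⟩ := exists_abs_eigenvalues_eq_norm hST
  set v := hST.eigenvectorBasis i
  have hv_norm : ‖v‖ = 1 := hST.eigenvectorBasis.norm_eq_one i
  have hv : star v.ofLp ⬝ᵥ v.ofLp = 1 := star_dotProduct_eigenvectorBasis_self hST i
  have hle : s + t ≤
      RCLike.re (star v.ofLp ⬝ᵥ (S *ᵥ v.ofLp) + star v.ofLp ⬝ᵥ (T *ᵥ v.ofLp)) := by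
    rw [map_add]
    exact add_le_add (le_re_star_dotProduct_mulVec hS hv) (le_re_star_dotProduct_mulVec hT hv)
  calc (s + t) * ‖S - T‖
      ≤ ‖star v.ofLp ⬝ᵥ (S *ᵥ v.ofLp) + star v.ofLp ⬝ᵥ (T *ᵥ v.ofLp)‖ * |hST.eigenvalues i| := by
        rw [hi]
        gcongr
        exact hle.trans (RCLike.re_le_norm _)
    _ = ‖star v.ofLp ⬝ᵥ ((S * S - T * T) *ᵥ v.ofLp)‖ := by
        rw [star_dotProduct_mul_self_sub_mul_self_mulVec hST (hST.mulVec_eigenvectorBasis i),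
          norm_smul, Real.norm_eq_abs, mul_comm]
    _ ≤ ‖S * S - T * T‖ := by
        simpa only [hv_norm, one_pow, mul_one] using
          norm_star_dotProduct_mulVec_le (S * S - T * T) v

theorem posDef_of_algebraMap_le {A : Matrix ι ι 𝕜} {c : ℝ} (hc : 0 < c)
    (hA : algebraMap ℝ (Matrix ι ι 𝕜) c ≤ A) : A.PosDef := by
  rw [Algebra.algebraMap_eq_smul_one, Matrix.le_iff] at hA
  simpa only [add_sub_cancel] using (Matrix.PosDef.one.smul hc).add_posSemidef hA

theorem norm_inv_le_inv_of_algebraMap_le {A : Matrix ι ι 𝕜} {c : ℝ} (hc : 0 < c)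
    (hA : algebraMap ℝ (Matrix ι ι 𝕜) c ≤ A) : ‖A⁻¹‖ ≤ c⁻¹ := by
  have hA_pos : A.PosDef := posDef_of_algebraMap_le hc hA
  have hA_inv : A⁻¹.IsHermitian := hA_pos.isHermitian.inv
  rw [norm_eq_norm_eigenvalues hA_inv, pi_norm_le_iff_of_nonneg (inv_nonneg.2 hc.le)]
  intro i
  have hc_le : c ≤ (hA_inv.eigenvalues i)⁻¹ := by
    obtain ⟨u, rfl⟩ := hA_pos.isUnit
    refine (algebraMap_le_iff_le_spectrum hA_pos.isHermitian.isSelfAdjoint).1 hA _ ?_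
    rw [spectrum.inv₀_mem_iff, Matrix.coe_units_inv]
    exact hA_inv.eigenvalues_mem_spectrum_real i
  have h_pos : 0 < hA_inv.eigenvalues i := inv_pos.1 (hc.trans_le hc_le)
  rw [Real.norm_of_nonneg h_pos.le]
  exact (le_inv_comm₀ hc h_pos).1 hc_le

theorem norm_inv_sub_inv_le {S T : Matrix ι ι 𝕜} {s t : ℝ} (hs : 0 < s) (ht : 0 < t)
    (hS : algebraMap ℝ (Matrix ι ι 𝕜) s ≤ S) (hT : algebraMap ℝ (Matrix ι ι 𝕜) t ≤ T) :
    ‖T⁻¹ - S⁻¹‖ ≤ ‖S * S - T * T‖ / (s * t * (s + t)) := by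
  have hSp := posDef_of_algebraMap_le hs hS
  have hTp := posDef_of_algebraMap_le ht hT
  have hsub : ‖S - T‖ ≤ ‖S * S - T * T‖ / (s + t) := by
    rw [le_div_iff₀' (by positivity)]
    exact add_mul_norm_sub_le (hSp.isHermitian.sub hTp.isHermitian) hS hT
  calc ‖T⁻¹ - S⁻¹‖ = ‖T⁻¹ * (S - T) * S⁻¹‖ := by
        rw [Matrix.inv_sub_inv (iff_of_true hTp.isUnit hSp.isUnit)]
    _ ≤ ‖T⁻¹‖ * ‖S - T‖ * ‖S⁻¹‖ := norm_mul₃_le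
    _ ≤ t⁻¹ * (‖S * S - T * T‖ / (s + t)) * s⁻¹ := by
        gcongr
        exacts [norm_inv_le_inv_of_algebraMap_le ht hT, norm_inv_le_inv_of_algebraMap_le hs hS]
    _ = ‖S * S - T * T‖ / (s * t * (s + t)) := by field_simp

theorem algebraMap_iInf_eigenvalues_le {A : Matrix ι ι 𝕜} (hA : A.IsHermitian) :
    algebraMap ℝ (Matrix ι ι 𝕜) (⨅ i, hA.eigenvalues i) ≤ A :=
  (algebraMap_le_iff_le_eigenvalues hA).2 (ciInf_le (Set.finite_range _).bddBelow)

theorem iInf_eigenvalues_pos [Nonempty ι] {A : Matrix ι ι 𝕜} (hA : A.PosDef) :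
    0 < ⨅ i, hA.isHermitian.eigenvalues i := by
  obtain ⟨i, hi⟩ := exists_eq_ciInf_of_finite (f := hA.isHermitian.eigenvalues)
  exact hi ▸ hA.eigenvalues_pos i

theorem iInf_eigenvalues_le_norm [Nonempty ι] {A : Matrix ι ι 𝕜} (hA : A.IsHermitian) :
    ⨅ i, hA.eigenvalues i ≤ ‖A‖ :=
  let i := Classical.arbitrary ι
  calc ⨅ i, hA.eigenvalues i ≤ hA.eigenvalues i := ciInf_le (Set.finite_range _).bddBelow i
    _ ≤ ‖A‖ := (le_abs_self _).trans (abs_eigenvalues_le_norm hA i)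

theorem norm_inv_sqrt_sub_inv_sqrt_le {S T : Matrix ι ι 𝕜} {l L : ℝ} (hl : 0 < l) (hL : l ≤ L)
    (hS : 0 ≤ S) (hT : 0 ≤ T) (hSS : algebraMap ℝ (Matrix ι ι 𝕜) l ≤ S * S)
    (hTT : algebraMap ℝ (Matrix ι ι 𝕜) (l / 2) ≤ T * T) :
    ‖T⁻¹ - S⁻¹‖ ≤ 2 * √L * ‖S * S - T * T‖ / l ^ 2 := by
  refine (norm_inv_sub_inv_le (Real.sqrt_pos.2 hl) (Real.sqrt_pos.2 (half_pos hl))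
    (algebraMap_sqrt_le_of_algebraMap_le_mul_self hS hSS)
    (algebraMap_sqrt_le_of_algebraMap_le_mul_self hT hTT)).trans ?_
  rw [div_le_div_iff₀ (by positivity) (by positivity), mul_right_comm, mul_comm]
  exact mul_le_mul_of_nonneg_right (sq_le_two_mul_sqrt_mul hl.le hL) (norm_nonneg _)

theorem stmt_12_general {A Δ : Matrix ι ι 𝕜} (hA : A.PosDef) (hΔ : Δ.IsHermitian)
    (hbound : ‖Δ‖ ≤ (⨅ i, hA.isHermitian.eigenvalues i) / 2) :
    (A + Δ).PosDef ∧
    ∀ S T : Matrix ι ι 𝕜, S.PosDef → S * S = A → T.PosDef → T * T = A + Δ →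
      ‖T⁻¹ - S⁻¹‖ ≤ 2 * √‖A‖ * ‖Δ‖ / (⨅ i, hA.isHermitian.eigenvalues i) ^ 2 := by
  cases isEmpty_or_nonempty ι
  · exact ⟨Subsingleton.elim A (A + Δ) ▸ hA, fun S T _ _ _ _ ↦ by
      simp [Subsingleton.elim T S, Subsingleton.elim Δ 0]⟩
  set l := ⨅ i, hA.isHermitian.eigenvalues i
  have hl : 0 < l := iInf_eigenvalues_pos hA
  have hA_ge : algebraMap ℝ (Matrix ι ι 𝕜) l ≤ A := algebraMap_iInf_eigenvalues_le hA.isHermitian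
  have hAΔ_ge : algebraMap ℝ (Matrix ι ι 𝕜) (l / 2) ≤ A + Δ := by
    simpa only [sub_half] using algebraMap_sub_le_add hA_ge hΔ hbound
  refine ⟨posDef_of_algebraMap_le (half_pos hl) hAΔ_ge, fun S T hS hSS hT hTT ↦ ?_⟩
  have hΔ_norm : ‖S * S - T * T‖ = ‖Δ‖ := by rw [hSS, hTT, sub_add_cancel_left, norm_neg]
  rw [← hΔ_norm]
  exact norm_inv_sqrt_sub_inv_sqrt_le hl (iInf_eigenvalues_le_norm hA.isHermitian)
    hS.posSemidef.nonneg hT.posSemidef.nonneg (hSS ▸ hA_ge) (hTT ▸ hAΔ_ge)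

end HermitianMatrix

theorem l2norm_eq_norm_toLp {α : Type*} [Fintype α] (v : α → ℝ) :
    l2norm v = ‖WithLp.toLp 2 v‖ := by
  simp [l2norm, l2sq, EuclideanSpace.norm_eq]

open scoped Matrix.Norms.L2Operator in
theorem opNorm_eq_norm {α β : Type*} [Fintype α] [Fintype β] [DecidableEq β]
    (A : Matrix α β ℝ) : opNorm A = ‖A‖ := by
  rw [Matrix.l2_opNorm_def, ← ContinuousLinearMap.sSup_sphere_eq_norm, opNorm]
  congr 1
  ext c
  refine (WithLp.equiv 2 (β → ℝ)).symm.exists_congr fun v ↦ ?_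
  rw [l2norm_eq_norm_toLp, l2norm_eq_norm_toLp, mem_sphere_zero_iff_norm, eq_comm (a := c)]
  rfl

theorem l2sq_eq_star_dotProduct {α : Type*} [Fintype α] (v : α → ℝ) :
    l2sq v = star v ⬝ᵥ v := by
  simp only [l2sq, dotProduct, star_trivial, sq]

open scoped MatrixOrder in
theorem lamMin_eq_iInf_eigenvalues {n : ℕ} {A : Matrix (Fin n) (Fin n) ℝ} (hA : A.IsHermitian) :
    lamMin A = ⨅ i, hA.eigenvalues i := by
  cases isEmpty_or_nonempty (Fin n)
  · simp [lamMin, l2sq]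
  refine IsLeast.csInf_eq ⟨?_, ?_⟩
  · obtain ⟨i, hi⟩ := exists_eq_ciInf_of_finite (f := hA.eigenvalues)
    refine ⟨hA.eigenvectorBasis i, ?_, ?_⟩
    · rw [l2sq_eq_star_dotProduct, star_dotProduct_eigenvectorBasis_self hA i]
    · rw [← hi, hA.eigenvalues_eq]
      rfl
  · rintro _ ⟨v, hv, rfl⟩
    exact le_re_star_dotProduct_mulVec (algebraMap_iInf_eigenvalues_le hA)
      (l2sq_eq_star_dotProduct v ▸ hv)

/-- perturbation bound for inverse square roots of positive definite
matrices (square roots characterized as the unique positive-definite matrices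
squaring to `A` resp. `A + Δ`). -/
theorem stmt_12 {n : ℕ} (A Δ : Matrix (Fin n) (Fin n) ℝ)
    (hA : A.PosDef) (hΔ : Δ.IsSymm) (hbound : opNorm Δ ≤ lamMin A / 2) :
    (A + Δ).PosDef ∧
    ∀ S T : Matrix (Fin n) (Fin n) ℝ,
      S.PosDef → S * S = A → T.PosDef → T * T = A + Δ →
      opNorm (T⁻¹ - S⁻¹) ≤ 2 * Real.sqrt (opNorm A) * opNorm Δ / (lamMin A) ^ 2 := by
  simpa only [opNorm_eq_norm, lamMin_eq_iInf_eigenvalues hA.isHermitian] using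
    stmt_12_general hA (Matrix.isHermitian_iff_isSymm.2 hΔ)
      (by simpa only [opNorm_eq_norm, lamMin_eq_iInf_eigenvalues hA.isHermitian] using hbound)

end
end
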